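/- Let f : ℝ^{d-1} → ℝ^m be continuous with compact support and let v = 𝓗f be its Poisson extension to the half-space ℝ^d_+. Then ∫_{ℝ^d_+} y_d |∇v(y',y_d)|² dy' dy_d = (1/2) ∫_{ℝ^{d-1}} |f(y')|² dy'. -/

import Mathlib

/-!
Write `v(·, t)` for the Poisson extension of `f` at height `t` and `g t = ∫ |v(x', t)|² dx'`.
The identity is an integration by parts in `t` alone, because `g` satisfies `g'' = 2 ∫ |∇v|² dx'`:
two differentiations under the integral give `g'' = 2 ∫ (|∂_t v|² + v · ∂_t² v)`, harmonicity of `v`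
turns `∂_t² v` into `-∑ ∂_i² v`, and integrating by parts in the horizontal variables turns
`-∫ v · ∂_i² v` into `∫ |∂_i v|²` (`hasDerivAt_l2`, `hasDerivAt_l2_deriv`). Thus `g` is convex on
`(0, ∞)`. Moreover `g(0+) = ∫ |f|²` (`tendsto_l2_zero`) and `g(∞) = 0` (`tendsto_l2_atTop`).
For a convex function with finite limits at both ends, comparison of `g'(t)` with the slopes of `g`
over `[t/2, t]` and `[t, 2 * t]` forces `t g'(t) → 0` at both ends, so integrating
`t g'' = (t g' - g)'` gives `∫ t g'' = g(0+)` (`integral_mul_of_convex_limits`). Dividing by two and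
applying Fubini in the half-space (`integral_upperHalf`) yields the claim.

The analytic input is the explicit kernel. Its first two derivatives are computed along lines
(`fderiv_ker0`, `fderiv_ker1`, `laplacian_ker0`). On slabs `a ≤ x_d ≤ b` with `a > 0` the kernel and
these derivatives are `O((1 + |x'|)^{-d})` (`ker_bound`), a decay inherited by their convolutions
with the compactly supported `f` (`cv_decay`); it supplies all dominating functions and makes the
horizontal boundary terms vanish. Near `t = 0` the maximum principle replaces the kernel bound over
a neighbourhood of the support of `f`; for `t ≥ 1` the weaker decay `(1 + |x'|)^{-(d-1)}`, uniform in
`t`, is square integrable on `ℝ^{d-1}` since `d > 2`.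
-/

/- Setting: upper half-space ℝ^d_+ modelled as pairs (x', x_d) ∈ ℝ^{d-1} × ℝ with x_d > 0,
   target ℝ^m ⊇ N a smooth closed manifold. -/

open MeasureTheory Metric ENNReal

noncomputable section

namespace HarmonicMapsHalfSpace

/-- Horizontal slice ℝ^{d-1}. -/
abbrev E' (d : ℕ) := EuclideanSpace ℝ (Fin (d - 1))

/-- Target Euclidean space ℝ^m. -/
abbrev Fm (m : ℕ) := EuclideanSpace ℝ (Fin m)

/-- The open upper half-space ℝ^d_+. -/
def upperHalf (d : ℕ) : Set (E' d × ℝ) := {x | 0 < x.2}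

/-- Normalizing constant `c_d` of the Poisson kernel, chosen so that `∫ P_t = 1`. -/
def cP (d : ℕ) : ℝ := (∫ y : E' d, ((‖y‖ ^ 2 + 1) ^ (-(d : ℝ) / 2)))⁻¹

/-- The half-space Poisson kernel `P_t(x') = c_d t (|x'|² + t²)^{-d/2}`. -/
def poissonKernel (d : ℕ) (t : ℝ) (x' : E' d) : ℝ :=
  cP d * t * (‖x'‖ ^ 2 + t ^ 2) ^ (-(d : ℝ) / 2)

/-- Poisson extension `𝓗f` of a boundary datum `f : ℝ^{d-1} → ℝ^m`. -/
def poissonExt (d m : ℕ) (f : E' d → Fm m) (x : E' d × ℝ) : Fm m :=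
  ∫ y' : E' d, poissonKernel d x.2 (x.1 - y') • f y'

/-- Euclidean norm of a point of ℝ^{d-1} × ℝ. -/
def eNorm (d : ℕ) (p : E' d × ℝ) : ℝ := Real.sqrt (‖p.1‖ ^ 2 + p.2 ^ 2)

/-- Constant of the fundamental solution of `-Δ` in ℝ^d: `1/((d-2)·σ_{d-1})`
where `σ_{d-1} = d·ω_d` is the surface area of the unit sphere. -/
def greenConst (d : ℕ) : ℝ :=
  1 / (((d : ℝ) - 2) * ((d : ℝ) *
    (volume (Metric.ball (0 : EuclideanSpace ℝ (Fin d)) 1)).toReal))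

/-- Green function of the Dirichlet Laplacian on the upper half-space (reflection formula). -/
def greenFn (d : ℕ) (x y : E' d × ℝ) : ℝ :=
  greenConst d * ((eNorm d (x.1 - y.1, x.2 - y.2)) ^ (2 - (d : ℝ)) -
    (eNorm d (x.1 - y.1, x.2 + y.2)) ^ (2 - (d : ℝ)))

/-- Newtonian (Green) potential `𝓝F` on the upper half-space. -/
def newtonPot (d m : ℕ) (F : E' d × ℝ → Fm m) (x : E' d × ℝ) : Fm m :=
  ∫ y in upperHalf d, greenFn d x y • F y

/-- The Carleson box `B_{x_d}(x') × (0, x_d)`. -/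
def carlesonBox (d : ℕ) (x : E' d × ℝ) : Set (E' d × ℝ) :=
  (Metric.ball x.1 x.2) ×ˢ (Set.Ioo 0 x.2)

/-- `L^∞` part of the `𝐗`-norm (as an extended real). -/
def supNorm (d m : ℕ) (u : E' d × ℝ → Fm m) : ℝ≥0∞ :=
  ⨆ (x : E' d × ℝ) (_ : 0 < x.2), ENNReal.ofReal ‖u x‖

/-- Weighted gradient sup seminorm `sup_{x_d>0} x_d ‖∇u(·,x_d)‖_∞`. -/
def gradSupSemi (d m : ℕ) (u : E' d × ℝ → Fm m) : ℝ≥0∞ :=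
  ⨆ (x : E' d × ℝ) (_ : 0 < x.2), ENNReal.ofReal (x.2 * ‖fderiv ℝ u x‖)

/-- Carleson measure seminorm
`sup_x ( x_d^{1-d} ∫_{B_{x_d}(x')}∫_0^{x_d} y_d |∇u|² )^{1/2}`. -/
def carlesonSemi (d m : ℕ) (u : E' d × ℝ → Fm m) : ℝ≥0∞ :=
  ⨆ (x : E' d × ℝ) (_ : 0 < x.2),
    (ENNReal.ofReal (x.2 ^ (1 - (d : ℝ))) *
      ∫⁻ y in carlesonBox d x, ENNReal.ofReal (y.2 * ‖fderiv ℝ u y‖ ^ 2)) ^ (1 / 2 : ℝ)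

/-- The seminorm `|u|_𝐗`. -/
def Xsemi (d m : ℕ) (u : E' d × ℝ → Fm m) : ℝ≥0∞ :=
  gradSupSemi d m u + carlesonSemi d m u

/-- The norm `‖u‖_𝐗 = ‖u‖_{L^∞(ℝ^d_+)} + |u|_𝐗`. -/
def Xnorm (d m : ℕ) (u : E' d × ℝ → Fm m) : ℝ≥0∞ :=
  supNorm d m u + Xsemi d m u

/-- The norm of the source space `𝐘`. -/
def Ynorm (d m : ℕ) (F : E' d × ℝ → Fm m) : ℝ≥0∞ :=
  (⨆ (x : E' d × ℝ) (_ : 0 < x.2), ENNReal.ofReal (x.2 ^ 2 * ‖F x‖)) +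
  ⨆ (x : E' d × ℝ) (_ : 0 < x.2),
    ENNReal.ofReal (x.2 ^ (1 - (d : ℝ))) *
      ∫⁻ y in carlesonBox d x, ENNReal.ofReal (y.2 * ‖F y‖)

/-- The `BMO(ℝ^{d-1})` seminorm. -/
def bmoSemi (d m : ℕ) (f : E' d → Fm m) : ℝ≥0∞ :=
  ⨆ (z : E' d) (r : ℝ) (_ : 0 < r),
    (volume (Metric.ball z r))⁻¹ *
      ∫⁻ y in Metric.ball z r,
        ENNReal.ofReal ‖f y - ⨍ w in Metric.ball z r, f w‖

/-- The (extended) second fundamental form `Γ̃` obtained from a smooth extension `P`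
of the nearest point projection onto `N`: `Γ̃(z)(v,w) = -Hess P(z)(v,w)`. -/
def sff (m : ℕ) (P : Fm m → Fm m) (z v w : Fm m) : Fm m :=
  -(fderiv ℝ (fderiv ℝ P) z v w)

/-- The nonlinearity `Γ(u)(∇u,∇u) = Σ_{i=1}^d Γ(u)(∂_i u, ∂_i u)`. -/
def tension (d m : ℕ) (Γ : Fm m → Fm m → Fm m → Fm m) (u : E' d × ℝ → Fm m)
    (x : E' d × ℝ) : Fm m :=
  (∑ i : Fin (d - 1),
      Γ (u x) (fderiv ℝ u x (EuclideanSpace.single i 1, (0 : ℝ)))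
        (fderiv ℝ u x (EuclideanSpace.single i 1, (0 : ℝ)))) +
    Γ (u x) (fderiv ℝ u x ((0 : E' d), (1 : ℝ)))
      (fderiv ℝ u x ((0 : E' d), (1 : ℝ)))

/-- `u` solves the Dirichlet problem for weakly harmonic maps with data `f`, in the
integral sense `u = 𝓗f + 𝓝(Γ(u)(∇u,∇u))` together with the constraint `u ∈ N` a.e. -/
def IsSolution (d m : ℕ) (Γ : Fm m → Fm m → Fm m → Fm m) (N : Set (Fm m))
    (f : E' d → Fm m) (u : E' d × ℝ → Fm m) : Prop :=
  (∀ x : E' d × ℝ, 0 < x.2 →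
    u x = poissonExt d m f x + newtonPot d m (tension d m Γ u) x) ∧
  (∀ᵐ x ∂(volume.restrict (upperHalf d)), u x ∈ N)

/-- Squared Euclidean length of the full gradient, `|∇u|² = Σ_{i=1}^d |∂_i u|²`. -/
def gradSq (d m : ℕ) (u : E' d × ℝ → Fm m) (x : E' d × ℝ) : ℝ :=
  (∑ i : Fin (d - 1), ‖fderiv ℝ u x (EuclideanSpace.single i 1, (0 : ℝ))‖ ^ 2) +
    ‖fderiv ℝ u x ((0 : E' d), (1 : ℝ))‖ ^ 2

/-! ### A one-dimensional identity for convex functions -/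

open Filter Topology Set in
/-- If `g` is convex (`g'' = 2 D ≥ 0`) on `(0, ∞)` with `g(0+) = A` and `g(∞) = 0`, then
`t g'(t)` vanishes at both ends, and integrating `2 t D = (t g' - g)'` gives `∫ t D = A / 2`. -/
lemma integral_mul_of_convex_limits {g h D : ℝ → ℝ} {A : ℝ}
    (hg : ∀ t, 0 < t → HasDerivAt g (h t) t)
    (hh : ∀ t, 0 < t → HasDerivAt h (2 * D t) t)
    (hD : ∀ t, 0 < t → 0 ≤ D t)
    (h0 : Tendsto g (𝓝[>] 0) (𝓝 A)) (hinf : Tendsto g atTop (𝓝 0)) :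
    IntegrableOn (fun t => t * D t) (Ioi 0) ∧ ∫ t in Ioi 0, t * D t = (1 / 2) * A := by
  have hmono : MonotoneOn h (Ioi 0) := by
    apply monotoneOn_of_deriv_nonneg (convex_Ioi 0)
    · exact fun x hx => (hh x hx).continuousAt.continuousWithinAt
    · intro x hx
      rw [interior_Ioi] at hx
      exact (hh x hx).differentiableAt.differentiableWithinAt
    · intro x hx
      rw [interior_Ioi] at hx
      rw [(hh x hx).deriv]
      have := hD x hx
      positivity
  have mvt : ∀ a b, 0 < a → a < b → ∃ c ∈ Ioo a b, h c = (g b - g a) / (b - a) := by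
    intro a b ha hab
    apply exists_hasDerivAt_eq_slope g h hab
    · exact fun x hx => (hg x (ha.trans_le hx.1)).continuousAt.continuousWithinAt
    · exact fun x hx => hg x (ha.trans hx.1)
  -- monotonicity of `g' = h` compares `h t` with the slopes of `g` on `[t/2, t]` and `[t, 2 * t]`
  have lower : ∀ t, 0 < t → 2 * (g t - g (t / 2)) ≤ t * h t := by
    intro t ht
    obtain ⟨c, hc, e⟩ := mvt (t / 2) t (by positivity) (by linarith)
    have hc0 : 0 < c := by linarith [hc.1]
    have := hmono hc0 ht hc.2.le
    rw [e, div_le_iff₀ (by linarith)] at this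
    linarith
  have upper : ∀ t, 0 < t → t * h t ≤ g (2 * t) - g t := by
    intro t ht
    obtain ⟨c, hc, e⟩ := mvt t (2 * t) (by positivity) (by linarith)
    have hc0 : 0 < c := by linarith [hc.1]
    have := hmono ht hc0 hc.1.le
    rw [e, le_div_iff₀ (by linarith)] at this
    linarith
  have th0 : Tendsto (fun t => t * h t) (𝓝[>] 0) (𝓝 0) := by
    have e1 : Tendsto (fun t : ℝ => t / 2) (𝓝[>] 0) (𝓝[>] 0) := by
      refine tendsto_nhdsWithin_iff.2 ⟨?_, ?_⟩
      · have : Tendsto (fun t : ℝ => t / 2) (𝓝 0) (𝓝 (0 / 2)) :=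
          (continuous_id.div_const 2).tendsto 0
        rw [zero_div] at this
        exact this.mono_left nhdsWithin_le_nhds
      · filter_upwards [self_mem_nhdsWithin] with t ht
        exact half_pos (show (0 : ℝ) < t from ht)
    have e2 : Tendsto (fun t : ℝ => 2 * t) (𝓝[>] 0) (𝓝[>] 0) := by
      refine tendsto_nhdsWithin_iff.2 ⟨?_, ?_⟩
      · have : Tendsto (fun t : ℝ => 2 * t) (𝓝 0) (𝓝 (2 * 0)) :=
          (continuous_const.mul continuous_id).tendsto 0
        rw [mul_zero] at this
        exact this.mono_left nhdsWithin_le_nhds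
      · filter_upwards [self_mem_nhdsWithin] with t ht
        exact mul_pos (two_pos (α := ℝ)) (show (0 : ℝ) < t from ht)
    refine tendsto_of_tendsto_of_tendsto_of_le_of_le' (g := fun t => 2 * (g t - g (t / 2)))
      (h := fun t => g (2 * t) - g t) ?_ ?_ ?_ ?_
    · simpa using ((h0.sub (h0.comp e1)).const_mul 2)
    · simpa using ((h0.comp e2).sub h0)
    · filter_upwards [self_mem_nhdsWithin] with t ht using lower t ht
    · filter_upwards [self_mem_nhdsWithin] with t ht using upper t ht
  have thinf : Tendsto (fun t => t * h t) atTop (𝓝 0) := by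
    have e1 : Tendsto (fun t : ℝ => t / 2) atTop atTop := tendsto_id.atTop_div_const two_pos
    have e2 : Tendsto (fun t : ℝ => 2 * t) atTop atTop := tendsto_id.const_mul_atTop two_pos
    refine tendsto_of_tendsto_of_tendsto_of_le_of_le' (g := fun t => 2 * (g t - g (t / 2)))
      (h := fun t => g (2 * t) - g t) ?_ ?_ ?_ ?_
    · simpa using ((hinf.sub (hinf.comp e1)).const_mul 2)
    · simpa using ((hinf.comp e2).sub hinf)
    · filter_upwards [eventually_gt_atTop 0] with t ht using lower t ht
    · filter_upwards [eventually_gt_atTop 0] with t ht using upper t ht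
  -- extend `t g' - g` continuously to `t = 0`
  set F : ℝ → ℝ := fun t => if 0 < t then t * h t - g t else -A with hF
  have hF0 : F 0 = -A := by simp [hF]
  have hFpos : ∀ t, 0 < t → F t = t * h t - g t := fun t ht => by simp [hF, ht]
  have hcont : ContinuousWithinAt F (Ici 0) 0 := by
    rw [← continuousWithinAt_Ioi_iff_Ici]
    have : Tendsto (fun t => t * h t - g t) (𝓝[>] 0) (𝓝 (-A)) := by
      simpa using th0.sub h0
    unfold ContinuousWithinAt
    rw [hF0]
    refine this.congr' ?_
    filter_upwards [self_mem_nhdsWithin] with t ht using (hFpos t ht).symm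
  have hderiv : ∀ t ∈ Ioi (0 : ℝ), HasDerivAt F (2 * (t * D t)) t := by
    intro t ht
    have h1 : HasDerivAt (fun t => t * h t - g t) (1 * h t + t * (2 * D t) - h t) t :=
      ((hasDerivAt_id t).mul (hh t ht)).sub (hg t ht)
    refine (h1.congr_deriv (by ring)).congr_of_eventuallyEq ?_
    filter_upwards [Ioi_mem_nhds ht] with s hs using hFpos s hs
  have hpos : ∀ t ∈ Ioi (0 : ℝ), 0 ≤ 2 * (t * D t) := by
    intro t ht
    have := hD t ht
    have ht' : 0 < t := ht
    positivity
  have hlim : Tendsto F atTop (𝓝 0) := by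
    have : Tendsto (fun t => t * h t - g t) atTop (𝓝 0) := by simpa using thinf.sub hinf
    refine this.congr' ?_
    filter_upwards [eventually_gt_atTop 0] with t ht using (hFpos t ht).symm
  have I1 := integrableOn_Ioi_deriv_of_nonneg hcont hderiv hpos hlim
  have I2 := integral_Ioi_of_hasDerivAt_of_nonneg hcont hderiv hpos hlim
  rw [hF0, integral_const_mul] at I2
  refine ⟨?_, by linarith⟩
  have := I1.const_mul (1 / 2 : ℝ)
  refine this.congr (Eventually.of_forall fun t => ?_)
  simp

/-! ### The Poisson kernel and its derivatives -/

/-- The squared Euclidean norm `|x'|² + x_d²`. -/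
def rho (d : ℕ) (p : E' d × ℝ) : ℝ := ‖p.1‖ ^ 2 + p.2 ^ 2

/-- The Euclidean inner product of `p` and `e` on `ℝ^{d-1} × ℝ`. -/
def ell (d : ℕ) (e p : E' d × ℝ) : ℝ := inner ℝ p.1 e.1 + p.2 * e.2

/-- The factor `c_d (|x'|² + x_d²)^{-d/2}` of the Poisson kernel. -/
def kerQ (d : ℕ) (p : E' d × ℝ) : ℝ := cP d * rho d p ^ (-(d : ℝ) / 2)

/-- The Poisson kernel as a function on `ℝ^{d-1} × ℝ`. -/
def ker0 (d : ℕ) (p : E' d × ℝ) : ℝ := p.2 * kerQ d p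

/-- The derivative `∂_e` of the Poisson kernel (for `x_d > 0`). -/
def ker1 (d : ℕ) (e p : E' d × ℝ) : ℝ :=
  kerQ d p * (e.2 - d * p.2 * ell d e p / rho d p)

/-- The second derivative `∂_e ∂_e` of the Poisson kernel (for `x_d > 0`). -/
def ker2 (d : ℕ) (e p : E' d × ℝ) : ℝ :=
  kerQ d p * (d * (d + 2) * p.2 * ell d e p ^ 2 / rho d p ^ 2
    - 2 * d * e.2 * ell d e p / rho d p - d * p.2 * rho d e / rho d p)

lemma rho_pos {d : ℕ} {p : E' d × ℝ} (hp : 0 < p.2) : 0 < rho d p := by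
  unfold rho; positivity

lemma isOpen_upperHalf (d : ℕ) : IsOpen (upperHalf d) :=
  isOpen_lt continuous_const continuous_snd

lemma contDiff_rho (d : ℕ) : ContDiff ℝ 1 (rho d) := by
  unfold rho; exact (contDiff_fst.norm_sq ℝ).add (contDiff_snd.pow 2)

lemma contDiff_ell (d : ℕ) (e : E' d × ℝ) : ContDiff ℝ 1 (ell d e) := by
  unfold ell
  exact (contDiff_fst.inner ℝ contDiff_const).add (contDiff_snd.mul contDiff_const)

lemma contDiffOn_kerQ (d : ℕ) : ContDiffOn ℝ 1 (kerQ d) (upperHalf d) := by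
  unfold kerQ
  exact contDiffOn_const.mul ((contDiff_rho d).contDiffOn.rpow_const_of_ne
    fun p hp => (rho_pos hp).ne')

lemma contDiffOn_ker0 (d : ℕ) : ContDiffOn ℝ 1 (ker0 d) (upperHalf d) := by
  unfold ker0
  exact contDiff_snd.contDiffOn.mul (contDiffOn_kerQ d)

lemma contDiffOn_ker1 (d : ℕ) (e : E' d × ℝ) : ContDiffOn ℝ 1 (ker1 d e) (upperHalf d) := by
  unfold ker1
  have hr := (contDiff_rho d).contDiffOn (s := upperHalf d)
  have hl := (contDiff_ell d e).contDiffOn (s := upperHalf d)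
  have hs : ContDiffOn ℝ 1 (fun p : E' d × ℝ => p.2) (upperHalf d) := contDiff_snd.contDiffOn
  have h0 : ∀ p ∈ upperHalf d, rho d p ≠ 0 := fun p hp => (rho_pos hp).ne'
  exact (contDiffOn_kerQ d).mul (contDiffOn_const.sub
    (((contDiffOn_const.mul hs).mul hl).div hr h0))

lemma contDiffOn_ker2 (d : ℕ) (e : E' d × ℝ) : ContDiffOn ℝ 1 (ker2 d e) (upperHalf d) := by
  unfold ker2
  have hr := (contDiff_rho d).contDiffOn (s := upperHalf d)
  have hl := (contDiff_ell d e).contDiffOn (s := upperHalf d)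
  have hs : ContDiffOn ℝ 1 (fun p : E' d × ℝ => p.2) (upperHalf d) := contDiff_snd.contDiffOn
  have h0 : ∀ p ∈ upperHalf d, rho d p ≠ 0 := fun p hp => (rho_pos hp).ne'
  exact (contDiffOn_kerQ d).mul (((((contDiffOn_const.mul hs).mul (hl.pow 2)).div (hr.pow 2)
    (fun p hp => pow_ne_zero 2 (h0 p hp))).sub ((contDiffOn_const.mul hl).div hr h0)).sub
    (((contDiffOn_const.mul hs).mul contDiffOn_const).div hr h0))

lemma line_add (d : ℕ) (e p : E' d × ℝ) (s : ℝ) :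
    rho d (p + s • e) = rho d p + 2 * s * ell d e p + s ^ 2 * rho d e ∧
    ell d e (p + s • e) = ell d e p + s * rho d e := by
  constructor
  · simp only [rho, ell, Prod.fst_add, Prod.snd_add, Prod.smul_fst, Prod.smul_snd, smul_eq_mul,
      norm_add_sq_real, norm_smul, inner_smul_right, Real.norm_eq_abs, mul_pow, sq_abs]
    ring
  · simp only [rho, ell, Prod.fst_add, Prod.snd_add, Prod.smul_fst, Prod.smul_snd, smul_eq_mul,
      inner_add_left, inner_smul_left, real_inner_self_eq_norm_sq]
    simp
    ring

lemma hasDerivAt_rho_line (d : ℕ) (e p : E' d × ℝ) :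
    HasDerivAt (fun s : ℝ => rho d (p + s • e)) (2 * ell d e p) 0 := by
  have h : HasDerivAt (fun s : ℝ => rho d p + s * (2 * ell d e p) + s ^ 2 * rho d e)
      (1 * (2 * ell d e p) + (2 : ℕ) * (0 : ℝ) ^ (2 - 1) * 1 * rho d e) 0 :=
    (((hasDerivAt_id (0 : ℝ)).mul_const _).const_add _).add
      (((hasDerivAt_id (0 : ℝ)).pow 2).mul_const _)
  refine (h.congr_deriv (by simp)).congr_of_eventuallyEq (Filter.Eventually.of_forall fun s => ?_)
  simp only [(line_add d e p s).1]
  ring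

lemma hasDerivAt_ell_line (d : ℕ) (e p : E' d × ℝ) :
    HasDerivAt (fun s : ℝ => ell d e (p + s • e)) (rho d e) 0 := by
  have h : HasDerivAt (fun s : ℝ => ell d e p + s * rho d e) (1 * rho d e) 0 :=
    ((hasDerivAt_id (0 : ℝ)).mul_const _).const_add _
  refine (h.congr_deriv (by simp)).congr_of_eventuallyEq (Filter.Eventually.of_forall fun s => ?_)
  simp only [(line_add d e p s).2]

lemma hasDerivAt_snd_line (d : ℕ) (e p : E' d × ℝ) :
    HasDerivAt (fun s : ℝ => (p + s • e).2) e.2 0 := by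
  have h : HasDerivAt (fun s : ℝ => p.2 + s * e.2) (1 * e.2) 0 :=
    ((hasDerivAt_id (0 : ℝ)).mul_const _).const_add _
  exact h.congr_deriv (by simp)

lemma hasDerivAt_kerQ_line (d : ℕ) (e p : E' d × ℝ) (hp : 0 < p.2) :
    HasDerivAt (fun s : ℝ => kerQ d (p + s • e)) (-d * ell d e p / rho d p * kerQ d p) 0 := by
  have hr := rho_pos hp
  have h := ((hasDerivAt_rho_line d e p).rpow_const (p := -(d : ℝ) / 2)
    (Or.inl (by simpa using hr.ne'))).const_mul (cP d)
  refine h.congr_deriv ?_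
  simp only [zero_smul, add_zero, kerQ]
  rw [Real.rpow_sub_one hr.ne']
  field_simp

lemma fderiv_ker0 (d : ℕ) (e p : E' d × ℝ) (hp : 0 < p.2) :
    fderiv ℝ (ker0 d) p e = ker1 d e p := by
  have hd : DifferentiableAt ℝ (ker0 d) p :=
    ((contDiffOn_ker0 d).differentiableOn one_ne_zero).differentiableAt
      ((isOpen_upperHalf d).mem_nhds hp)
  rw [← hd.lineDeriv_eq_fderiv]
  have h := (hasDerivAt_snd_line d e p).mul (hasDerivAt_kerQ_line d e p hp)
  refine (HasDerivAt.deriv (h.congr_deriv ?_))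
  have hr := rho_pos hp
  simp only [zero_smul, add_zero, ker1]
  field_simp
  ring

lemma fderiv_ker1 (d : ℕ) (e p : E' d × ℝ) (hp : 0 < p.2) :
    fderiv ℝ (ker1 d e) p e = ker2 d e p := by
  have hd : DifferentiableAt ℝ (ker1 d e) p :=
    ((contDiffOn_ker1 d e).differentiableOn one_ne_zero).differentiableAt
      ((isOpen_upperHalf d).mem_nhds hp)
  rw [← hd.lineDeriv_eq_fderiv]
  have hr := rho_pos hp
  have h := (hasDerivAt_kerQ_line d e p hp).mul
    (((((hasDerivAt_snd_line d e p).const_mul (d : ℝ)).mul (hasDerivAt_ell_line d e p)).div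
      (hasDerivAt_rho_line d e p) (by simpa using hr.ne')).const_sub e.2)
  refine (HasDerivAt.deriv (h.congr_deriv ?_))
  simp only [zero_smul, add_zero, ker2, Pi.mul_apply, Pi.div_apply]
  field_simp
  ring

/-- The Poisson kernel is harmonic in the upper half-space. -/
lemma laplacian_ker0 {d : ℕ} (hd : 2 < d) (p : E' d × ℝ) (hp : 0 < p.2) :
    (∑ i : Fin (d - 1), ker2 d (EuclideanSpace.single i 1, 0) p) + ker2 d (0, 1) p = 0 := by
  have hr := rho_pos hp
  have h1 : ∀ i : Fin (d - 1), ker2 d (EuclideanSpace.single i 1, 0) p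
      = kerQ d p * (d * (d + 2) * p.2 / rho d p ^ 2 * p.1 i ^ 2 - d * p.2 / rho d p) := by
    intro i
    simp [ker2, ell, rho, EuclideanSpace.inner_single_right]
    left; ring
  simp_rw [h1]
  rw [← Finset.mul_sum, Finset.sum_sub_distrib, ← Finset.mul_sum]
  have h2 : ∑ i, p.1 i ^ 2 = rho d p - p.2 ^ 2 := by
    simp [rho, EuclideanSpace.norm_sq_eq]
  rw [h2]
  have h3 : ((d - 1 : ℕ) : ℝ) = d - 1 := by
    rw [Nat.cast_sub (by omega)]; simp
  have h4 : ell d (0, 1) p = p.2 := by simp [ell]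
  have h5 : rho d ((0, 1) : E' d × ℝ) = 1 := by simp [rho]
  simp only [Finset.sum_const, Finset.card_univ, Fintype.card_fin, nsmul_eq_mul, h3, ker2, h4, h5]
  field_simp
  ring

/-! ### Decay of the kernels and convolution with the boundary datum -/

/-- Cauchy–Schwarz for a unit vector `e`: the projection of `p` onto `eᗮ` has nonnegative
squared length. -/
lemma ell_sq_le (d : ℕ) {e p : E' d × ℝ} (he : rho d e = 1) : ell d e p ^ 2 ≤ rho d p := by
  have h : 0 ≤ rho d (p + (-ell d e p) • e) := by unfold rho; positivity
  rw [(line_add d e p _).1, he] at h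
  linarith

lemma cP_nonneg (d : ℕ) : 0 ≤ cP d := by
  unfold cP
  exact inv_nonneg.2 (integral_nonneg fun y => by positivity)

lemma kerQ_nonneg (d : ℕ) (p : E' d × ℝ) : 0 ≤ kerQ d p := by
  unfold kerQ rho
  have := cP_nonneg d
  positivity

/-- Above a height `a > 0`, `|x'|² + x_d²` dominates a multiple of `(1 + |x'|)²`. -/
lemma kerQ_bound (d : ℕ) {a : ℝ} (ha : 0 < a) :
    ∃ C, 0 ≤ C ∧ ∀ p : E' d × ℝ, a ≤ p.2 → kerQ d p ≤ C * (1 + ‖p.1‖) ^ (-(d : ℝ)) := by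
  set c : ℝ := min 1 (a ^ 2) / 2 with hc
  have hc0 : 0 < c := by positivity
  refine ⟨cP d * c ^ (-(d : ℝ) / 2), mul_nonneg (cP_nonneg d) (by positivity), fun p hp => ?_⟩
  have h1 : c * (1 + ‖p.1‖) ^ 2 ≤ rho d p := by
    have h2 : c * 2 ≤ 1 := by rw [hc]; linarith [min_le_left 1 (a ^ 2)]
    have h3 : c * 2 ≤ p.2 ^ 2 := by
      have : a ^ 2 ≤ p.2 ^ 2 := by gcongr
      rw [hc]; linarith [min_le_right 1 (a ^ 2)]
    unfold rho
    nlinarith [mul_nonneg hc0.le (sq_nonneg (1 - ‖p.1‖)), sq_nonneg ‖p.1‖]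
  have h2 : ((1 + ‖p.1‖) ^ 2) ^ (-(d : ℝ) / 2) = (1 + ‖p.1‖) ^ (-(d : ℝ)) := by
    rw [← Real.rpow_natCast, ← Real.rpow_mul (by positivity)]
    congr 1
    push_cast
    ring
  unfold kerQ
  rw [mul_assoc, ← h2, ← Real.mul_rpow hc0.le (by positivity)]
  refine mul_le_mul_of_nonneg_left ?_ (cP_nonneg d)
  have hd : (0 : ℝ) ≤ d := Nat.cast_nonneg d
  exact Real.rpow_le_rpow_of_nonpos (by positivity) h1 (by linarith)

/-- On a slab `a ≤ x_d ≤ b`, the Poisson kernel and its first two directional derivatives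
decay like `|x'|^{-d}`. -/
lemma ker_bound (d : ℕ) {e : E' d × ℝ} (he : rho d e = 1) {a : ℝ} (b : ℝ) (ha : 0 < a) :
    ∃ C, 0 ≤ C ∧ ∀ p : E' d × ℝ, a ≤ p.2 → p.2 ≤ b →
      |ker0 d p| ≤ C * (1 + ‖p.1‖) ^ (-(d : ℝ)) ∧
      |ker1 d e p| ≤ C * (1 + ‖p.1‖) ^ (-(d : ℝ)) ∧
      |ker2 d e p| ≤ C * (1 + ‖p.1‖) ^ (-(d : ℝ)) := by
  obtain ⟨C, hC, hQ⟩ := kerQ_bound d ha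
  have key : ∀ M : ℝ, ∀ p : E' d × ℝ, a ≤ p.2 → ∀ z, |z| ≤ M →
      |kerQ d p * z| ≤ (M * C) * (1 + ‖p.1‖) ^ (-(d : ℝ)) := by
    intro M p hp z hz
    rw [abs_mul, abs_of_nonneg (kerQ_nonneg d p)]
    calc kerQ d p * |z| ≤ (C * (1 + ‖p.1‖) ^ (-(d : ℝ))) * M :=
          mul_le_mul (hQ p hp) hz (abs_nonneg _) (by positivity)
      _ = _ := by ring
  have he2 : |e.2| ≤ 1 := by
    rw [← sq_le_one_iff_abs_le_one, ← he]
    unfold rho; nlinarith [sq_nonneg ‖e.1‖]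
  -- `M` bounds the cofactor of `kerQ` in each of the three kernels, one summand per kernel
  set M : ℝ := |b| + (1 + d) + (d * (d + 2) * |b| / a ^ 2 + 2 * d * (1 / a ^ 2 + 1)
    + d * |b| / a ^ 2) with hM
  have hb := abs_nonneg b
  have hM1 : |b| ≤ M := by
    have : 0 ≤ (1 + d : ℝ) + (d * (d + 2) * |b| / a ^ 2 + 2 * d * (1 / a ^ 2 + 1)
      + d * |b| / a ^ 2) := by positivity
    linarith
  have hM2 : (1 + d : ℝ) ≤ M := by
    have : 0 ≤ (d * (d + 2) * |b| / a ^ 2 + 2 * d * (1 / a ^ 2 + 1)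
      + d * |b| / a ^ 2) := by positivity
    linarith
  have hM3 : d * (d + 2) * |b| / a ^ 2 + 2 * d * (1 / a ^ 2 + 1)
      + d * |b| / a ^ 2 ≤ M := by
    have : (0 : ℝ) ≤ 1 + d := by positivity
    linarith
  refine ⟨M * C, mul_nonneg (hb.trans hM1) hC, fun p hp hpb => ?_⟩
  have hp0 : 0 < p.2 := ha.trans_le hp
  have hr := rho_pos (d := d) hp0
  have hl := ell_sq_le d (p := p) he
  have hpb' : p.2 ≤ |b| := hpb.trans (le_abs_self b)
  have hra : a ^ 2 ≤ rho d p := by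
    have : a ^ 2 ≤ p.2 ^ 2 := by gcongr
    unfold rho; nlinarith [sq_nonneg ‖p.1‖]
  have htr : p.2 ^ 2 ≤ rho d p := by unfold rho; nlinarith [sq_nonneg ‖p.1‖]
  have habs : |ell d e p| ≤ 1 + rho d p := by
    rw [abs_le]; constructor <;> nlinarith [sq_nonneg (ell d e p - 1), sq_nonneg (ell d e p + 1)]
  have hinv : 1 / rho d p ≤ 1 / a ^ 2 := one_div_le_one_div_of_le (by positivity) hra
  refine ⟨?_, ?_, ?_⟩
  · unfold ker0
    rw [mul_comm]
    exact key M p hp _ (by rw [abs_of_pos hp0]; linarith)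
  · refine key M p hp _ (le_trans ?_ hM2)
    refine (abs_sub _ _).trans (add_le_add he2 ?_)
    rw [abs_div, abs_of_pos hr, div_le_iff₀ hr, mul_assoc, abs_mul, Nat.abs_cast]
    refine mul_le_mul_of_nonneg_left ?_ (Nat.cast_nonneg d)
    rw [abs_le]
    constructor <;> nlinarith [sq_nonneg (p.2 - ell d e p), sq_nonneg (p.2 + ell d e p)]
  · refine key M p hp _ (le_trans ?_ hM3)
    refine (abs_sub _ _).trans (add_le_add ((abs_sub _ _).trans (add_le_add ?_ ?_)) ?_)
    · rw [abs_of_nonneg (by positivity)]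
      calc d * (d + 2) * p.2 * ell d e p ^ 2 / rho d p ^ 2
          = d * (d + 2) * p.2 * (ell d e p ^ 2 / rho d p) * (1 / rho d p) := by
            field_simp
        _ ≤ d * (d + 2) * |b| * 1 * (1 / a ^ 2) := by
            gcongr
            rw [div_le_one hr]; exact hl
        _ = _ := by ring
    · rw [abs_div, abs_of_pos hr, abs_mul, abs_mul, abs_of_nonneg (by positivity : (0:ℝ) ≤ 2 * d)]
      calc 2 * d * |e.2| * |ell d e p| / rho d p ≤ 2 * d * 1 * (1 + rho d p) / rho d p := by
            gcongr
        _ = 2 * d * (1 / rho d p + 1) := by field_simp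
        _ ≤ _ := by gcongr
    · rw [he, abs_of_nonneg (by positivity)]
      calc d * p.2 * 1 / rho d p = d * p.2 * (1 / rho d p) := by ring
        _ ≤ d * |b| * (1 / a ^ 2) := by gcongr
        _ = _ := by ring

/-- The convolution `k(·, x_d) * f` in the horizontal variable. -/
def cv {d m : ℕ} (k : E' d × ℝ → ℝ) (f : E' d → Fm m) (p : E' d × ℝ) : Fm m :=
  ∫ y, k (p.1 - y, p.2) • f y

lemma poissonExt_eq_cv (d m : ℕ) (f : E' d → Fm m) : poissonExt d m f = cv (ker0 d) f := by
  funext p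
  unfold poissonExt cv
  refine integral_congr_ae (Filter.Eventually.of_forall fun y => ?_)
  simp only [poissonKernel, ker0, kerQ, rho]
  congr 1
  ring

section conv

variable {d m : ℕ} {f : E' d → Fm m}

lemma continuous_kernel_slice {X : Type*} [TopologicalSpace X] {k : E' d × ℝ → X}
    (hk : ContinuousOn k (upperHalf d)) {p : E' d × ℝ} (hp : 0 < p.2) :
    Continuous fun y => k (p.1 - y, p.2) :=
  hk.comp_continuous (by fun_prop) fun _ => hp

lemma integrable_kernel_smul (hf : Continuous f) (hfc : HasCompactSupport f) {k : E' d × ℝ → ℝ}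
    (hk : ContinuousOn k (upperHalf d)) {p : E' d × ℝ} (hp : 0 < p.2) :
    Integrable fun y => k (p.1 - y, p.2) • f y :=
  ((continuous_kernel_slice hk hp).smul hf).integrable_of_hasCompactSupport hfc.smul_left

/-- Differentiation of `k * f` under the integral sign; compactness of the support of `f`
provides the domination. -/
lemma hasFDerivAt_cv (hf : Continuous f) (hfc : HasCompactSupport f) {k : E' d × ℝ → ℝ}
    (hk : ContDiffOn ℝ 1 k (upperHalf d)) {p : E' d × ℝ} (hp : 0 < p.2) :
    HasFDerivAt (cv k f) (∫ y, (fderiv ℝ k (p.1 - y, p.2)).smulRight (f y)) p ∧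
      Integrable fun y => (fderiv ℝ k (p.1 - y, p.2)).smulRight (f y) := by
  have hU := isOpen_upperHalf d
  have hkd : ContinuousOn (fderiv ℝ k) (upperHalf d) := hk.continuousOn_fderiv_of_isOpen hU le_rfl
  have hcont : ∀ q : E' d × ℝ, 0 < q.2 →
      Continuous fun y => (fderiv ℝ k (q.1 - y, q.2)).smulRight (f y) := fun q hq =>
    (ContinuousLinearMap.smulRightL ℝ (E' d × ℝ) (Fm m)).continuous₂.comp
      ((continuous_kernel_slice hkd hq).prodMk hf)
  obtain ⟨r, hr, hball⟩ := Metric.nhds_basis_closedBall.mem_iff.1 (hU.mem_nhds hp)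
  have hcomp : IsCompact (closedBall p r ×ˢ tsupport f) :=
    (isCompact_closedBall p r).prod hfc
  obtain ⟨C, hC⟩ := hcomp.exists_bound_of_continuousOn
    (f := fun z : (E' d × ℝ) × E' d => fderiv ℝ k (z.1.1 - z.2, z.1.2))
    (hkd.comp (by fun_prop) fun z hz =>
      (show (0 : ℝ) < z.1.2 from hball hz.1))
  refine ⟨?_, ?_⟩
  · refine hasFDerivAt_integral_of_dominated_of_fderiv_le
      (F := fun (q : E' d × ℝ) y => k (q.1 - y, q.2) • f y)
      (F' := fun (q : E' d × ℝ) y => (fderiv ℝ k (q.1 - y, q.2)).smulRight (f y))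
      (bound := fun y => C * ‖f y‖) (closedBall_mem_nhds p hr) ?_ ?_ ?_ ?_ ?_ ?_
    · filter_upwards [hU.mem_nhds hp] with q hq
      exact ((continuous_kernel_slice hk.continuousOn hq).smul hf).aestronglyMeasurable
    · exact integrable_kernel_smul hf hfc hk.continuousOn hp
    · exact (hcont p hp).aestronglyMeasurable
    · refine Filter.Eventually.of_forall fun y q hq => ?_
      rw [ContinuousLinearMap.norm_smulRight_apply]
      by_cases hy : y ∈ tsupport f
      · exact mul_le_mul_of_nonneg_right (hC (q, y) ⟨hq, hy⟩) (norm_nonneg _)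
      · simp [image_eq_zero_of_notMem_tsupport hy]
    · exact (hf.norm.integrable_of_hasCompactSupport hfc.norm).const_mul C
    · refine Filter.Eventually.of_forall fun y q hq => ?_
      have h1 : HasFDerivAt k (fderiv ℝ k (q.1 - y, q.2)) (q.1 - y, q.2) :=
        ((hk.differentiableOn one_ne_zero).differentiableAt (x := (q.1 - y, q.2))
          (hU.mem_nhds (show (0 : ℝ) < q.2 from hball hq))).hasFDerivAt
      have h2 : HasFDerivAt (fun q : E' d × ℝ => (q.1 - y, q.2))
          (ContinuousLinearMap.id ℝ (E' d × ℝ)) q := by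
        have : (fun q : E' d × ℝ => (q.1 - y, q.2)) = fun q => q - (y, 0) := by
          funext q; ext <;> simp
        rw [this]
        exact (hasFDerivAt_id q).sub_const _
      have h3 := (h1.comp q h2).smul_const (f y)
      simpa using h3
  · refine (hcont p hp).integrable_of_hasCompactSupport (hfc.mono' fun y hy => ?_)
    by_contra h
    exact hy (by simp [image_eq_zero_of_notMem_tsupport h])

lemma differentiableAt_cv (hf : Continuous f) (hfc : HasCompactSupport f) {k : E' d × ℝ → ℝ}
    (hk : ContDiffOn ℝ 1 k (upperHalf d)) {p : E' d × ℝ} (hp : 0 < p.2) :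
    DifferentiableAt ℝ (cv k f) p :=
  (hasFDerivAt_cv hf hfc hk hp).1.differentiableAt

/-- If `∂_e k = k'` in the half-space, then `∂_e (k * f) = k' * f` there. -/
lemma fderiv_cv (hf : Continuous f) (hfc : HasCompactSupport f) {k k' : E' d × ℝ → ℝ}
    (hk : ContDiffOn ℝ 1 k (upperHalf d)) {e : E' d × ℝ}
    (hk' : ∀ q : E' d × ℝ, 0 < q.2 → fderiv ℝ k q e = k' q) {p : E' d × ℝ} (hp : 0 < p.2) :
    fderiv ℝ (cv k f) p e = cv k' f p := by
  obtain ⟨h1, h2⟩ := hasFDerivAt_cv hf hfc hk hp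
  rw [h1.fderiv, ContinuousLinearMap.integral_apply h2]
  refine integral_congr_ae (Filter.Eventually.of_forall fun y => ?_)
  simp [hk' (p.1 - y, p.2) hp]

lemma norm_cv_le (hf : Continuous f) (hfc : HasCompactSupport f) {k : E' d × ℝ → ℝ} {p : E' d × ℝ}
    {B : ℝ} (hB : ∀ y ∈ tsupport f, |k (p.1 - y, p.2)| ≤ B) :
    ‖cv k f p‖ ≤ B * ∫ y, ‖f y‖ := by
  unfold cv
  rw [← integral_const_mul]
  refine norm_integral_le_of_norm_le
    ((hf.norm.integrable_of_hasCompactSupport hfc.norm).const_mul B)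
    (Filter.Eventually.of_forall fun y => ?_)
  rw [norm_smul, Real.norm_eq_abs]
  by_cases hy : y ∈ tsupport f
  · exact mul_le_mul_of_nonneg_right (hB y hy) (norm_nonneg _)
  · simp [image_eq_zero_of_notMem_tsupport hy]

/-- Power decay of a kernel in the horizontal variable is inherited by its convolution with `f`. -/
lemma cv_decay (hf : Continuous f) (hfc : HasCompactSupport f) {s : ℝ} (hs : 0 ≤ s) :
    ∃ A, 0 ≤ A ∧ ∀ (k : E' d × ℝ → ℝ) (t C : ℝ), 0 ≤ C →
      (∀ x, |k (x, t)| ≤ C * (1 + ‖x‖) ^ (-s)) →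
      ∀ x, ‖cv k f (x, t)‖ ≤ A * C * (1 + ‖x‖) ^ (-s) := by
  obtain ⟨R, hR, hsub⟩ := hfc.isCompact.isBounded.subset_closedBall_lt 0 0
  refine ⟨(1 + R) ^ s * ∫ y, ‖f y‖,
    mul_nonneg (by positivity) (integral_nonneg fun y => norm_nonneg _), ?_⟩
  intro k t C hC hk x
  refine (norm_cv_le hf hfc (B := C * ((1 + R) ^ s * (1 + ‖x‖) ^ (-s))) ?_).trans
    (le_of_eq (by ring))
  intro y hy
  have hyR : ‖y‖ ≤ R := by simpa using hsub hy
  refine (hk (x - y)).trans (mul_le_mul_of_nonneg_left ?_ hC)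
  have h1 : 1 + ‖x‖ ≤ (1 + R) * (1 + ‖x - y‖) := by
    have : ‖x‖ ≤ ‖x - y‖ + ‖y‖ := by simpa using norm_add_le (x - y) y
    nlinarith [norm_nonneg (x - y)]
  have h2 : (1 + ‖x‖) ^ s ≤ (1 + R) ^ s * (1 + ‖x - y‖) ^ s := by
    rw [← Real.mul_rpow (by positivity) (by positivity)]
    exact Real.rpow_le_rpow (by positivity) h1 hs
  rw [Real.rpow_neg (by positivity), Real.rpow_neg (by positivity), ← div_eq_mul_inv,
    le_div_iff₀ (by positivity), inv_mul_le_iff₀ (by positivity)]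
  linarith

end conv

/-! ### The `L²` norm on horizontal slices -/

section energy

open Filter Topology

variable {d m : ℕ} {f : E' d → Fm m}

/-- Slice-wise continuity together with `|x'|^{-d}` decay, locally uniform in `x_d > 0`. -/
def SliceDecay (d m : ℕ) (u : E' d × ℝ → Fm m) : Prop :=
  (∀ t, 0 < t → Continuous fun x => u (x, t)) ∧
    ∀ a b : ℝ, 0 < a → ∃ C, 0 ≤ C ∧ ∀ (x : E' d) (t : ℝ), a ≤ t → t ≤ b →
      ‖u (x, t)‖ ≤ C * (1 + ‖x‖) ^ (-(d : ℝ))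

lemma integrable_decay (hd : 2 < d) : Integrable fun x : E' d => (1 + ‖x‖) ^ (-(d : ℝ)) := by
  refine integrable_one_add_norm ?_
  rw [finrank_euclideanSpace_fin]
  exact_mod_cast (by omega : d - 1 < d)

/-- The product of two functions with the decay `(1 + |x|)^{-d}` has the same decay. -/
lemma decay_mul_le (x : E' d) {A B a b : ℝ} (hb : 0 ≤ b) (hA : 0 ≤ A)
    (h1 : a ≤ A * (1 + ‖x‖) ^ (-(d : ℝ))) (h2 : b ≤ B * (1 + ‖x‖) ^ (-(d : ℝ))) :
    a * b ≤ A * B * (1 + ‖x‖) ^ (-(d : ℝ)) := by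
  have h0 : 0 < (1 + ‖x‖) ^ (-(d : ℝ)) := by positivity
  have hB : 0 ≤ B := nonneg_of_mul_nonneg_left (hb.trans h2) h0
  have h3 : (1 + ‖x‖) ^ (-(d : ℝ)) ≤ 1 :=
    Real.rpow_le_one_of_one_le_of_nonpos (by linarith [norm_nonneg x]) (by simp)
  calc a * b ≤ (A * (1 + ‖x‖) ^ (-(d : ℝ))) * (B * (1 + ‖x‖) ^ (-(d : ℝ))) := by gcongr
    _ = A * B * (1 + ‖x‖) ^ (-(d : ℝ)) * (1 + ‖x‖) ^ (-(d : ℝ)) := by ring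
    _ ≤ A * B * (1 + ‖x‖) ^ (-(d : ℝ)) * 1 := by gcongr
    _ = _ := mul_one _

lemma SliceDecay.integrable_inner (hd : 2 < d) {u w : E' d × ℝ → Fm m}
    (hu : SliceDecay d m u) (hw : SliceDecay d m w) {t : ℝ} (ht : 0 < t) :
    Integrable fun x => inner ℝ (u (x, t)) (w (x, t)) := by
  obtain ⟨A, hA, hA'⟩ := hu.2 t t ht
  obtain ⟨B, hB, hB'⟩ := hw.2 t t ht
  refine ((integrable_decay hd).const_mul (A * B)).mono'
    ((hu.1 t ht).inner (hw.1 t ht)).aestronglyMeasurable (Eventually.of_forall fun x => ?_)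
  exact (norm_inner_le_norm _ _).trans (decay_mul_le x (norm_nonneg _) hA
    (hA' x t le_rfl le_rfl) (hB' x t le_rfl le_rfl))

lemma SliceDecay.integrable_norm_sq (hd : 2 < d) {u : E' d × ℝ → Fm m}
    (hu : SliceDecay d m u) {t : ℝ} (ht : 0 < t) :
    Integrable fun x => ‖u (x, t)‖ ^ 2 := by
  simpa only [real_inner_self_eq_norm_sq] using hu.integrable_inner hd hu ht

/-- Differentiation in `x_d` of the horizontal `L²` pairing of two functions. -/
lemma hasDerivAt_integral_inner (hd : 2 < d) {u w u' w' : E' d × ℝ → Fm m}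
    (hu : SliceDecay d m u) (hw : SliceDecay d m w)
    (hu' : SliceDecay d m u') (hw' : SliceDecay d m w')
    (du : ∀ x t, 0 < t → HasDerivAt (fun s => u (x, s)) (u' (x, t)) t)
    (dw : ∀ x t, 0 < t → HasDerivAt (fun s => w (x, s)) (w' (x, t)) t)
    {t : ℝ} (ht : 0 < t) :
    HasDerivAt (fun s => ∫ x, inner ℝ (u (x, s)) (w (x, s)))
      (∫ x, (inner ℝ (u (x, t)) (w' (x, t)) + inner ℝ (u' (x, t)) (w (x, t)))) t := by
  have h2 : 0 < t / 2 := by positivity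
  obtain ⟨A, hA, bu⟩ := hu.2 (t / 2) (2 * t) h2
  obtain ⟨B, hB, bw⟩ := hw.2 (t / 2) (2 * t) h2
  obtain ⟨A', hA', bu'⟩ := hu'.2 (t / 2) (2 * t) h2
  obtain ⟨B', hB', bw'⟩ := hw'.2 (t / 2) (2 * t) h2
  refine (hasDerivAt_integral_of_dominated_loc_of_deriv_le
    (F := fun s x => inner ℝ (u (x, s)) (w (x, s)))
    (F' := fun s x => inner ℝ (u (x, s)) (w' (x, s)) + inner ℝ (u' (x, s)) (w (x, s)))
    (bound := fun x => (A * B' + A' * B) * (1 + ‖x‖) ^ (-(d : ℝ)))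
    (s := Set.Icc (t / 2) (2 * t)) (Icc_mem_nhds (by linarith) (by linarith))
    ?_ (hu.integrable_inner hd hw ht) ?_ ?_ ((integrable_decay hd).const_mul _) ?_).2
  · filter_upwards [Ioi_mem_nhds ht] with s hs
    exact ((hu.1 s hs).inner (hw.1 s hs)).aestronglyMeasurable
  · exact (((hu.1 t ht).inner (hw'.1 t ht)).add
      ((hu'.1 t ht).inner (hw.1 t ht))).aestronglyMeasurable
  · refine Eventually.of_forall fun x s hs => ?_
    refine (norm_add_le _ _).trans ?_
    rw [add_mul]
    exact add_le_add
      ((norm_inner_le_norm _ _).trans (decay_mul_le x (norm_nonneg _) hA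
        (bu x s hs.1 hs.2) (bw' x s hs.1 hs.2)))
      ((norm_inner_le_norm _ _).trans (decay_mul_le x (norm_nonneg _) hA'
        (bu' x s hs.1 hs.2) (bw x s hs.1 hs.2)))
  · refine Eventually.of_forall fun x s hs => ?_
    have hs0 : 0 < s := h2.trans_le hs.1
    exact (du x s hs0).inner ℝ (dw x s hs0)

lemma sliceDecay_cv (hf : Continuous f) (hfc : HasCompactSupport f) {k : E' d × ℝ → ℝ}
    (hk : ContDiffOn ℝ 1 k (upperHalf d))
    (hb : ∀ a b : ℝ, 0 < a → ∃ C, 0 ≤ C ∧ ∀ p : E' d × ℝ, a ≤ p.2 → p.2 ≤ b →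
      |k p| ≤ C * (1 + ‖p.1‖) ^ (-(d : ℝ))) : SliceDecay d m (cv k f) := by
  refine ⟨fun t ht => ?_, fun a b ha => ?_⟩
  · rw [continuous_iff_continuousAt]
    intro x
    exact (differentiableAt_cv hf hfc hk (p := (x, t)) ht).continuousAt.comp
      (f := fun x => (x, t)) (by fun_prop)
  · obtain ⟨A, hA, hdec⟩ := cv_decay hf hfc (s := d) (Nat.cast_nonneg d)
    obtain ⟨C, hC, hC'⟩ := hb a b ha
    exact ⟨A * C, mul_nonneg hA hC, fun x t h1 h2 => hdec k t C hC (fun x => hC' (x, t) h1 h2) x⟩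

lemma rho_single (i : Fin (d - 1)) : rho d (EuclideanSpace.single i 1, 0) = 1 := by
  simp [rho]

lemma rho_vert : rho d ((0, 1) : E' d × ℝ) = 1 := by simp [rho]

lemma sliceDecay_ker0 (hf : Continuous f) (hfc : HasCompactSupport f) :
    SliceDecay d m (cv (ker0 d) f) :=
  sliceDecay_cv hf hfc (contDiffOn_ker0 d) fun _ b ha =>
    let ⟨C, hC, h⟩ := ker_bound d rho_vert b ha
    ⟨C, hC, fun p h1 h2 => (h p h1 h2).1⟩

lemma sliceDecay_ker1 (hf : Continuous f) (hfc : HasCompactSupport f) {e : E' d × ℝ}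
    (he : rho d e = 1) : SliceDecay d m (cv (ker1 d e) f) :=
  sliceDecay_cv hf hfc (contDiffOn_ker1 d e) fun _ b ha =>
    let ⟨C, hC, h⟩ := ker_bound d he b ha
    ⟨C, hC, fun p h1 h2 => (h p h1 h2).2.1⟩

lemma sliceDecay_ker2 (hf : Continuous f) (hfc : HasCompactSupport f) {e : E' d × ℝ}
    (he : rho d e = 1) : SliceDecay d m (cv (ker2 d e) f) :=
  sliceDecay_cv hf hfc (contDiffOn_ker2 d e) fun _ b ha =>
    let ⟨C, hC, h⟩ := ker_bound d he b ha
    ⟨C, hC, fun p h1 h2 => (h p h1 h2).2.2⟩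

lemma hasDerivAt_vert (hf : Continuous f) (hfc : HasCompactSupport f) {k k' : E' d × ℝ → ℝ}
    (hk : ContDiffOn ℝ 1 k (upperHalf d))
    (hk' : ∀ q : E' d × ℝ, 0 < q.2 → fderiv ℝ k q (0, 1) = k' q) (x : E' d) {t : ℝ}
    (ht : 0 < t) : HasDerivAt (fun s => cv k f (x, s)) (cv k' f (x, t)) t := by
  have h1 := (differentiableAt_cv hf hfc hk (p := (x, t)) ht).hasFDerivAt
  have h2 : HasDerivAt (fun s : ℝ => (x, s)) ((0 : E' d), (1 : ℝ)) t :=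
    (hasDerivAt_const t x).prodMk (hasDerivAt_id t)
  have h3 := h1.comp_hasDerivAt t h2
  rwa [fderiv_cv hf hfc hk hk' (p := (x, t)) ht] at h3

lemma hasLineDerivAt_horiz (hf : Continuous f) (hfc : HasCompactSupport f) {k k' : E' d × ℝ → ℝ}
    (hk : ContDiffOn ℝ 1 k (upperHalf d)) {a : E' d}
    (hk' : ∀ q : E' d × ℝ, 0 < q.2 → fderiv ℝ k q (a, 0) = k' q) (x : E' d) {t : ℝ}
    (ht : 0 < t) : HasLineDerivAt ℝ (fun y => cv k f (y, t)) (cv k' f (x, t)) x a := by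
  have h1 := (differentiableAt_cv hf hfc hk (p := (x, t)) ht).hasFDerivAt
  have h2 : HasFDerivAt (fun y : E' d => (y, t)) (ContinuousLinearMap.inl ℝ (E' d) ℝ) x :=
    hasFDerivAt_prodMk_left x t
  have h3 := (h1.comp x h2).hasLineDerivAt a
  simp only [ContinuousLinearMap.comp_apply, ContinuousLinearMap.inl_apply] at h3
  rwa [fderiv_cv hf hfc hk hk' (p := (x, t)) ht] at h3

/-- Horizontal integration by parts for a horizontal unit vector `a`:
`∫ v · ∂_a² v = -∫ |∂_a v|²` on each slice. -/
lemma integral_inner_ker2_horiz (hd : 2 < d) (hf : Continuous f) (hfc : HasCompactSupport f)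
    {a : E' d} (ha : rho d (a, 0) = 1) {t : ℝ} (ht : 0 < t) :
    ∫ x, inner ℝ (cv (ker0 d) f (x, t)) (cv (ker2 d (a, 0)) f (x, t)) =
      -∫ x, ‖cv (ker1 d (a, 0)) f (x, t)‖ ^ 2 := by
  have h0 := sliceDecay_ker0 hf hfc
  have h1 := sliceDecay_ker1 hf hfc ha
  have h2 := sliceDecay_ker2 hf hfc ha
  have := integral_bilinear_hasLineDerivAt_right_eq_neg_left_of_integrable (μ := volume)
    (B := innerSL ℝ) (v := a)
    (f := fun x => cv (ker0 d) f (x, t)) (f' := fun x => cv (ker1 d (a, 0)) f (x, t))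
    (g := fun x => cv (ker1 d (a, 0)) f (x, t)) (g' := fun x => cv (ker2 d (a, 0)) f (x, t))
    (h1.integrable_inner hd h1 ht) (h0.integrable_inner hd h2 ht) (h0.integrable_inner hd h1 ht)
    (fun x _ => hasLineDerivAt_horiz hf hfc (contDiffOn_ker0 d) (fun q hq => fderiv_ker0 d _ q hq)
      x ht)
    (fun x _ => hasLineDerivAt_horiz hf hfc (contDiffOn_ker1 d _) (fun q hq => fderiv_ker1 d _ q hq)
      x ht)
  simp only [← real_inner_self_eq_norm_sq]
  exact this

lemma gradSq_cv (hf : Continuous f) (hfc : HasCompactSupport f) (p : E' d × ℝ) (hp : 0 < p.2) :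
    gradSq d m (cv (ker0 d) f) p =
      (∑ i : Fin (d - 1), ‖cv (ker1 d (EuclideanSpace.single i 1, 0)) f p‖ ^ 2) +
        ‖cv (ker1 d (0, 1)) f p‖ ^ 2 := by
  unfold gradSq
  rw [fderiv_cv hf hfc (contDiffOn_ker0 d) (fun q hq => fderiv_ker0 d _ q hq) hp]
  congr 1
  refine Finset.sum_congr rfl fun i _ => ?_
  rw [fderiv_cv hf hfc (contDiffOn_ker0 d) (fun q hq => fderiv_ker0 d _ q hq) hp]

/-- Harmonicity of the Poisson extension, solved for the vertical second derivative. -/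
lemma laplacian_cv (hd : 2 < d) (hf : Continuous f) (hfc : HasCompactSupport f) (p : E' d × ℝ)
    (hp : 0 < p.2) :
    cv (ker2 d (0, 1)) f p =
      -∑ i : Fin (d - 1), cv (ker2 d (EuclideanSpace.single i 1, 0)) f p := by
  have hi : ∀ e : E' d × ℝ, Integrable fun y => ker2 d e (p.1 - y, p.2) • f y := fun e =>
    integrable_kernel_smul hf hfc (contDiffOn_ker2 d e).continuousOn hp
  rw [eq_neg_iff_add_eq_zero, add_comm]
  unfold cv
  rw [← integral_finsetSum _ fun i _ => hi _, ← integral_add (integrable_finsetSum _ fun i _ => hi _)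
    (hi _)]
  refine (integral_congr_ae (Eventually.of_forall fun y => ?_)).trans (integral_zero' _ _)
  have := laplacian_ker0 hd (p.1 - y, p.2) hp
  simp only [← Finset.sum_smul, ← add_smul, this, zero_smul, Pi.zero_apply]

/-- The horizontal Dirichlet density `∫ |∇v(x', t)|² dx'`. -/
def sliceEnergy (d m : ℕ) (u : E' d × ℝ → Fm m) (t : ℝ) : ℝ := ∫ x, gradSq d m u (x, t)

lemma integrable_gradSq_slice (hd : 2 < d) (hf : Continuous f) (hfc : HasCompactSupport f)
    {t : ℝ} (ht : 0 < t) : Integrable fun x => gradSq d m (cv (ker0 d) f) (x, t) := by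
  simp_rw [fun x => gradSq_cv hf hfc (x, t) ht]
  exact (integrable_finsetSum _ fun i _ =>
    (sliceDecay_ker1 hf hfc (rho_single i)).integrable_norm_sq hd ht).add
    ((sliceDecay_ker1 hf hfc rho_vert).integrable_norm_sq hd ht)

lemma hasDerivAt_l2 (hd : 2 < d) (hf : Continuous f) (hfc : HasCompactSupport f)
    {t : ℝ} (ht : 0 < t) :
    HasDerivAt (fun s => ∫ x, ‖cv (ker0 d) f (x, s)‖ ^ 2)
      (2 * ∫ x, inner ℝ (cv (ker0 d) f (x, t)) (cv (ker1 d (0, 1)) f (x, t))) t := by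
  have h0 := sliceDecay_ker0 hf hfc
  have h1 := sliceDecay_ker1 hf hfc rho_vert
  have hv : ∀ x t, 0 < t → HasDerivAt (fun s => cv (ker0 d) f (x, s))
      (cv (ker1 d (0, 1)) f (x, t)) t := fun x t ht =>
    hasDerivAt_vert hf hfc (contDiffOn_ker0 d) (fun q hq => fderiv_ker0 d _ q hq) x ht
  have h := hasDerivAt_integral_inner hd h0 h0 h1 h1 hv hv ht
  simp only [real_inner_self_eq_norm_sq] at h
  refine h.congr_deriv ?_
  rw [← integral_const_mul]
  refine integral_congr_ae (Eventually.of_forall fun x => ?_)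
  simp only
  rw [real_inner_comm (cv (ker0 d) f (x, t)) (cv (ker1 d (0, 1)) f (x, t))]
  ring

/-- Harmonicity of `v`: `(∫ |v|²)'' = 2 ∫ |∇v|²`. -/
lemma hasDerivAt_l2_deriv (hd : 2 < d) (hf : Continuous f) (hfc : HasCompactSupport f)
    {t : ℝ} (ht : 0 < t) :
    HasDerivAt
      (fun s => 2 * ∫ x, inner ℝ (cv (ker0 d) f (x, s)) (cv (ker1 d (0, 1)) f (x, s)))
      (2 * sliceEnergy d m (cv (ker0 d) f) t) t := by
  have h0 := sliceDecay_ker0 hf hfc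
  have h1 := sliceDecay_ker1 hf hfc rho_vert
  have h2 := sliceDecay_ker2 hf hfc rho_vert
  have hv : ∀ x t, 0 < t → HasDerivAt (fun s => cv (ker0 d) f (x, s))
      (cv (ker1 d (0, 1)) f (x, t)) t := fun x t ht =>
    hasDerivAt_vert hf hfc (contDiffOn_ker0 d) (fun q hq => fderiv_ker0 d _ q hq) x ht
  have hw : ∀ x t, 0 < t → HasDerivAt (fun s => cv (ker1 d (0, 1)) f (x, s))
      (cv (ker2 d (0, 1)) f (x, t)) t := fun x t ht =>
    hasDerivAt_vert hf hfc (contDiffOn_ker1 d _) (fun q hq => fderiv_ker1 d _ q hq) x ht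
  have h := (hasDerivAt_integral_inner hd h0 h1 h1 h2 hv hw ht).const_mul 2
  refine h.congr_deriv ?_
  congr 1
  unfold sliceEnergy
  rw [integral_add (h0.integrable_inner hd h2 ht) (h1.integrable_inner hd h1 ht)]
  simp_rw [fun x => gradSq_cv hf hfc (x, t) ht, fun x => laplacian_cv hd hf hfc (x, t) ht,
    inner_neg_right, inner_sum, real_inner_self_eq_norm_sq]
  have hi : ∀ i : Fin (d - 1), Integrable fun x =>
      ‖cv (ker1 d (EuclideanSpace.single i 1, 0)) f (x, t)‖ ^ 2 := fun i =>
    (sliceDecay_ker1 hf hfc (rho_single i)).integrable_norm_sq hd ht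
  rw [integral_add (integrable_finsetSum _ fun i _ => hi i) (h1.integrable_norm_sq hd ht),
    integral_neg, integral_finsetSum _ fun i _ => h0.integrable_inner hd
      (sliceDecay_ker2 hf hfc (rho_single i)) ht, integral_finsetSum _ fun i _ => hi i,
    ← Finset.sum_neg_distrib]
  congr 1
  refine Finset.sum_congr rfl fun i _ => ?_
  rw [integral_inner_ker2_horiz hd hf hfc (rho_single i) ht, neg_neg]

end energy

/-! ### Limits at the boundary and at infinity -/

section limits

open Filter Topology

variable {d m : ℕ} {f : E' d → Fm m}

/-- The normalized profile of the Poisson kernel, i.e. the kernel at height `1`. -/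
def profile (d : ℕ) (z : E' d) : ℝ := cP d * (‖z‖ ^ 2 + 1) ^ (-(d : ℝ) / 2)

lemma integrable_profile_aux (hd : 2 < d) :
    Integrable fun z : E' d => (‖z‖ ^ 2 + 1) ^ (-(d : ℝ) / 2) := by
  have := integrable_rpow_neg_one_add_norm_sq (E := E' d) (μ := volume) (r := d) (by
    rw [finrank_euclideanSpace_fin]
    exact_mod_cast (by omega : d - 1 < d))
  simpa only [add_comm] using this

lemma integral_profile (hd : 2 < d) : ∫ z, profile d z = 1 := by
  unfold profile
  rw [integral_const_mul]
  unfold cP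
  refine inv_mul_cancel₀ (ne_of_gt ?_)
  refine (integral_pos_iff_support_of_nonneg (fun z => by positivity)
    (integrable_profile_aux hd)).2 ?_
  have : (Function.support fun z : E' d => (‖z‖ ^ 2 + 1) ^ (-(d : ℝ) / 2)) = Set.univ := by
    ext z
    simp only [Function.mem_support, Set.mem_univ, iff_true]
    positivity
  rw [this]
  simp [NeZero.ne]

/-- Scaling: the Poisson kernel at height `t` is the `L¹`-normalized dilation of its profile. -/
lemma ker0_eq_profile (hd : 2 < d) (z : E' d) {t : ℝ} (ht : 0 < t) :
    ker0 d (z, t) = (t⁻¹) ^ (d - 1) * profile d (t⁻¹ • z) := by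
  have h1 : ‖t⁻¹ • z‖ ^ 2 + 1 = (t ^ 2)⁻¹ * (‖z‖ ^ 2 + t ^ 2) := by
    rw [norm_smul, Real.norm_eq_abs, mul_pow, sq_abs]
    field_simp
  have h2 : ((t ^ 2)⁻¹) ^ (-(d : ℝ) / 2) = t ^ d := by
    rw [← Real.rpow_natCast t 2, ← Real.rpow_neg ht.le, ← Real.rpow_mul ht.le,
      ← Real.rpow_natCast t d]
    congr 1
    push_cast
    ring
  have h3 : t ^ d = t ^ (d - 1) * t := by
    rw [← pow_succ]; congr 1; omega
  unfold ker0 kerQ rho profile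
  simp only
  rw [h1, Real.mul_rpow (by positivity) (by positivity), h2, h3, inv_pow]
  field_simp

lemma ker0_nonneg (z : E' d) {t : ℝ} (ht : 0 < t) : 0 ≤ ker0 d (z, t) :=
  mul_nonneg ht.le (kerQ_nonneg d _)

lemma integral_ker0 (hd : 2 < d) (x : E' d) {t : ℝ} (ht : 0 < t) :
    Integrable (fun y => ker0 d (x - y, t)) ∧ ∫ y, ker0 d (x - y, t) = 1 := by
  simp_rw [fun z => ker0_eq_profile hd z ht]
  constructor
  · have h1 : Integrable (profile d) := (integrable_profile_aux hd).const_mul _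
    exact ((h1.comp_smul (inv_ne_zero ht.ne')).comp_sub_left x).const_mul _
  · rw [integral_sub_left_eq_self (fun z => t⁻¹ ^ (d - 1) * profile d (t⁻¹ • z)) volume x,
      integral_const_mul, Measure.integral_comp_smul, integral_profile hd,
      finrank_euclideanSpace_fin, abs_of_pos (by positivity)]
    simp
    field_simp

/-- Maximum principle for the Poisson extension. -/
lemma norm_v_le (hd : 2 < d) {M : ℝ} (hM : ∀ y, ‖f y‖ ≤ M) (x : E' d) {t : ℝ} (ht : 0 < t) :
    ‖cv (ker0 d) f (x, t)‖ ≤ M := by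
  obtain ⟨h1, h2⟩ := integral_ker0 hd x ht
  unfold cv
  calc ‖∫ y, ker0 d (x - y, t) • f y‖ ≤ ∫ y, ker0 d (x - y, t) * M := by
        refine norm_integral_le_of_norm_le (h1.mul_const M) (Eventually.of_forall fun y => ?_)
        rw [norm_smul, Real.norm_of_nonneg (ker0_nonneg _ ht)]
        exact mul_le_mul_of_nonneg_left (hM y) (ker0_nonneg _ ht)
    _ = M := by rw [integral_mul_const, h2, one_mul]

/-- The Poisson extension attains its boundary values pointwise: the dilations of `profile` form
an approximate identity. -/
lemma tendsto_v_zero (hd : 2 < d) (hf : Continuous f) (hfc : HasCompactSupport f) (x : E' d) :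
    Tendsto (fun t => cv (ker0 d) f (x, t)) (𝓝[>] 0) (𝓝 (f x)) := by
  have hdec : Tendsto (fun z : E' d => ‖z‖ ^ Module.finrank ℝ (E' d) * profile d z)
      (Bornology.cobounded (E' d)) (𝓝 0) := by
    have hlim : Tendsto (fun z : E' d => cP d * ‖z‖⁻¹) (Bornology.cobounded (E' d)) (𝓝 0) := by
      simpa using (tendsto_inv_atTop_zero.comp
        (tendsto_norm_cobounded_atTop (E := E' d))).const_mul (cP d)
    refine tendsto_of_tendsto_of_tendsto_of_le_of_le' tendsto_const_nhds hlim ?_ ?_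
    · refine Eventually.of_forall fun z => ?_
      have := cP_nonneg d
      unfold profile
      positivity
    · filter_upwards [(tendsto_norm_cobounded_atTop (E := E' d)).eventually_gt_atTop 0] with z hz
      have h1 : (‖z‖ ^ 2 + 1) ^ (-(d : ℝ) / 2) ≤ (‖z‖ ^ 2) ^ (-(d : ℝ) / 2) :=
        Real.rpow_le_rpow_of_nonpos (by positivity) (by linarith)
          (by have : (0 : ℝ) ≤ d := Nat.cast_nonneg d
              linarith)
      have h2 : (‖z‖ ^ 2) ^ (-(d : ℝ) / 2) = (‖z‖ ^ d)⁻¹ := by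
        rw [← Real.rpow_natCast ‖z‖ 2, ← Real.rpow_mul hz.le, ← Real.rpow_natCast ‖z‖ d,
          ← Real.rpow_neg hz.le]
        congr 1
        push_cast
        ring
      have h3 : ‖z‖ ^ d = ‖z‖ ^ (d - 1) * ‖z‖ := by
        rw [← pow_succ]; congr 1; omega
      rw [finrank_euclideanSpace_fin]
      unfold profile
      calc ‖z‖ ^ (d - 1) * (cP d * (‖z‖ ^ 2 + 1) ^ (-(d : ℝ) / 2))
          ≤ ‖z‖ ^ (d - 1) * (cP d * (‖z‖ ^ 2) ^ (-(d : ℝ) / 2)) := by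
            have := cP_nonneg d
            gcongr
        _ = cP d * ‖z‖⁻¹ := by
            rw [h2, h3]
            field_simp
  have h := (tendsto_integral_comp_smul_smul_of_integrable' (μ := volume) (φ := profile d)
    (fun z => by have := cP_nonneg d
                 unfold profile
                 positivity) (integral_profile hd) hdec
    (hf.integrable_of_hasCompactSupport hfc) (x₀ := x) hf.continuousAt).comp
    (tendsto_inv_nhdsGT_zero (𝕜 := ℝ))
  refine h.congr' ?_
  filter_upwards [self_mem_nhdsWithin] with t ht
  simp only [Function.comp, cv, finrank_euclideanSpace_fin]
  simp_rw [fun z => ker0_eq_profile hd z (show (0 : ℝ) < t from ht)]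

/-- For `0 < t ≤ 1` the extension decays like `|x'|^{-d}` uniformly in `t`, which dominates the
limit `t → 0`. -/
lemma v_bound_small (hd : 2 < d) (hf : Continuous f) (hfc : HasCompactSupport f) :
    ∃ C, 0 ≤ C ∧ ∀ (x : E' d) (t : ℝ), 0 < t → t ≤ 1 →
      ‖cv (ker0 d) f (x, t)‖ ≤ C * (1 + ‖x‖) ^ (-(d : ℝ)) := by
  obtain ⟨M, hM⟩ := hf.bounded_above_of_compact_support hfc
  obtain ⟨R, hR, hsub⟩ := hfc.isCompact.isBounded.subset_closedBall_lt 1 0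
  have hM0 : 0 ≤ M := (norm_nonneg _).trans (hM 0)
  have hI : 0 ≤ ∫ y, ‖f y‖ := integral_nonneg fun y => norm_nonneg _
  have hc := cP_nonneg d
  have hd0 : (0 : ℝ) ≤ d := Nat.cast_nonneg d
  refine ⟨M * (1 + 2 * R) ^ (d : ℝ) + cP d * (1 / 4) ^ (-(d : ℝ)) * ∫ y, ‖f y‖, by positivity,
    fun x t ht ht1 => ?_⟩
  have hx : 0 < (1 + ‖x‖) ^ (-(d : ℝ)) := by positivity
  rw [add_mul]
  by_cases hxR : ‖x‖ ≤ 2 * R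
  · -- near the support: the maximum principle bound
    have h1 : 1 ≤ (1 + 2 * R) ^ (d : ℝ) * (1 + ‖x‖) ^ (-(d : ℝ)) := by
      rw [Real.rpow_neg (by positivity), ← div_eq_mul_inv, one_le_div (by positivity)]
      gcongr
    have h2 := norm_v_le hd hM x ht
    have h3 : 0 ≤ cP d * (1 / 4) ^ (-(d : ℝ)) * (∫ y, ‖f y‖) * (1 + ‖x‖) ^ (-(d : ℝ)) := by
      positivity
    nlinarith
  · -- away from the support the kernel itself is small
    have h3 : 0 ≤ M * (1 + 2 * R) ^ (d : ℝ) * (1 + ‖x‖) ^ (-(d : ℝ)) := by positivity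
    refine le_trans ?_ (le_add_of_nonneg_left h3)
    refine (norm_cv_le hf hfc
      (B := cP d * ((1 / 4) ^ (-(d : ℝ)) * (1 + ‖x‖) ^ (-(d : ℝ)))) ?_).trans (le_of_eq (by ring))
    intro y hy
    have hyR : ‖y‖ ≤ R := by simpa using hsub hy
    have h4 : (1 / 4) * (1 + ‖x‖) ≤ ‖x - y‖ := by
      have : ‖x‖ ≤ ‖x - y‖ + ‖y‖ := by simpa using norm_add_le (x - y) y
      linarith
    rw [abs_of_nonneg (ker0_nonneg _ ht), ← Real.mul_rpow (by norm_num) (by positivity)]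
    have h5 : rho d (x - y, t) ^ (-(d : ℝ) / 2) ≤ (((1 / 4) * (1 + ‖x‖)) ^ 2) ^ (-(d : ℝ) / 2) := by
      refine Real.rpow_le_rpow_of_nonpos (by positivity) ?_ (by linarith)
      have : ((1 / 4) * (1 + ‖x‖)) ^ 2 ≤ ‖x - y‖ ^ 2 := by gcongr
      unfold rho
      simp only
      nlinarith [sq_nonneg t]
    have h6 : (((1 / 4) * (1 + ‖x‖)) ^ 2) ^ (-(d : ℝ) / 2)
        = ((1 / 4) * (1 + ‖x‖)) ^ (-(d : ℝ)) := by
      rw [← Real.rpow_natCast, ← Real.rpow_mul (by positivity)]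
      congr 1
      push_cast
      ring
    rw [h6] at h5
    have h7 := kerQ_nonneg d (x - y, t)
    unfold ker0
    calc t * kerQ d (x - y, t) ≤ 1 * kerQ d (x - y, t) := by gcongr
      _ ≤ _ := by rw [one_mul]; unfold kerQ; gcongr

lemma tendsto_l2_zero (hd : 2 < d) (hf : Continuous f) (hfc : HasCompactSupport f) :
    Tendsto (fun t => ∫ x, ‖cv (ker0 d) f (x, t)‖ ^ 2) (𝓝[>] 0) (𝓝 (∫ x, ‖f x‖ ^ 2)) := by
  obtain ⟨C, hC, hb⟩ := v_bound_small hd hf hfc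
  refine tendsto_integral_filter_of_dominated_convergence
    (fun x => C * C * (1 + ‖x‖) ^ (-(d : ℝ))) ?_ ?_ ((integrable_decay hd).const_mul _) ?_
  · filter_upwards [self_mem_nhdsWithin] with t ht
    exact (((sliceDecay_ker0 hf hfc).1 t ht).norm.pow 2).aestronglyMeasurable
  · filter_upwards [Ioc_mem_nhdsGT (zero_lt_one (α := ℝ))] with t ht
    refine Eventually.of_forall fun x => ?_
    rw [Real.norm_of_nonneg (by positivity), sq]
    exact decay_mul_le x (norm_nonneg _) hC (hb x t ht.1 ht.2) (hb x t ht.1 ht.2)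
  · exact Eventually.of_forall fun x => (tendsto_v_zero hd hf hfc x).norm.pow 2

lemma rho_rpow_mul_le (z : E' d) {t : ℝ} (ht : 0 < t) :
    t * rho d (z, t) ^ (-(d : ℝ) / 2) ≤ rho d (z, t) ^ ((1 - (d : ℝ)) / 2) := by
  have hr : 0 < rho d (z, t) := rho_pos ht
  have h1 : t ≤ rho d (z, t) ^ (1 / 2 : ℝ) := by
    rw [← Real.sqrt_eq_rpow]
    apply Real.le_sqrt_of_sq_le
    unfold rho
    simp only
    nlinarith [sq_nonneg ‖z‖]
  have h2 : rho d (z, t) ^ ((1 - (d : ℝ)) / 2)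
      = rho d (z, t) ^ (1 / 2 : ℝ) * rho d (z, t) ^ (-(d : ℝ) / 2) := by
    rw [← Real.rpow_add hr]
    congr 1
    ring
  rw [h2]
  gcongr

lemma sq_rpow_half {a : ℝ} (ha : 0 ≤ a) (s : ℝ) : (a ^ 2) ^ (s / 2) = a ^ s := by
  rw [← Real.rpow_natCast, ← Real.rpow_mul ha]
  congr 1
  push_cast
  ring

/-- For `t ≥ 1` the kernel decays in `t` and, uniformly in `t`, like `|x'|^{-(d-1)}`. -/
lemma ker0_bound_large (hd : 2 < d) (z : E' d) {t : ℝ} (ht : 1 ≤ t) :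
    |ker0 d (z, t)| ≤ cP d * t ^ (1 - (d : ℝ)) ∧
    |ker0 d (z, t)| ≤ cP d * (1 / 2) ^ ((1 - (d : ℝ)) / 2) * (1 + ‖z‖) ^ (-((d : ℝ) - 1)) := by
  have ht0 : 0 < t := by linarith
  have hd2 : (2 : ℝ) < d := by exact_mod_cast hd
  have hk : ker0 d (z, t) ≤ cP d * rho d (z, t) ^ ((1 - (d : ℝ)) / 2) := by
    have := mul_le_mul_of_nonneg_left (rho_rpow_mul_le z ht0) (cP_nonneg d)
    unfold ker0 kerQ
    simp only
    linarith
  rw [abs_of_nonneg (ker0_nonneg z ht0)]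
  constructor
  · refine hk.trans (mul_le_mul_of_nonneg_left ?_ (cP_nonneg d))
    rw [← sq_rpow_half ht0.le]
    refine Real.rpow_le_rpow_of_nonpos (by positivity) ?_ (by linarith)
    unfold rho
    simp only
    nlinarith [sq_nonneg ‖z‖]
  · refine hk.trans ?_
    rw [mul_assoc]
    refine mul_le_mul_of_nonneg_left ?_ (cP_nonneg d)
    rw [neg_sub, ← sq_rpow_half (a := 1 + ‖z‖) (by positivity),
      ← Real.mul_rpow (by norm_num) (by positivity)]
    refine Real.rpow_le_rpow_of_nonpos (by positivity) ?_ (by linarith)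
    unfold rho
    simp only
    nlinarith [sq_nonneg (1 - ‖z‖)]

lemma tendsto_l2_atTop (hd : 2 < d) (hf : Continuous f) (hfc : HasCompactSupport f) :
    Tendsto (fun t => ∫ x, ‖cv (ker0 d) f (x, t)‖ ^ 2) atTop (𝓝 0) := by
  have hd2 : (2 : ℝ) < d := by exact_mod_cast hd
  obtain ⟨A, hA, hdec⟩ := cv_decay hf hfc (s := (d : ℝ) - 1) (by linarith)
  set C : ℝ := cP d * (1 / 2) ^ ((1 - (d : ℝ)) / 2) with hC
  have hC0 : 0 ≤ C := mul_nonneg (cP_nonneg d) (by positivity)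
  have hlim : Tendsto (fun t => ∫ x, ‖cv (ker0 d) f (x, t)‖ ^ 2) atTop
      (𝓝 (∫ _ : E' d, (0 : ℝ))) := by
    refine tendsto_integral_filter_of_dominated_convergence
      (fun x => (A * C) ^ 2 * (1 + ‖x‖) ^ (-(2 * ((d : ℝ) - 1)))) ?_ ?_ ?_ ?_
    · filter_upwards [eventually_gt_atTop 0] with t ht
      exact (((sliceDecay_ker0 hf hfc).1 t ht).norm.pow 2).aestronglyMeasurable
    · filter_upwards [eventually_ge_atTop 1] with t ht
      refine Eventually.of_forall fun x => ?_
      rw [Real.norm_of_nonneg (by positivity)]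
      have h1 := hdec (ker0 d) t C hC0 (fun z => (ker0_bound_large hd z ht).2) x
      have h2 : (1 + ‖x‖) ^ (-(2 * ((d : ℝ) - 1))) = ((1 + ‖x‖) ^ (-((d : ℝ) - 1))) ^ 2 := by
        rw [← Real.rpow_natCast, ← Real.rpow_mul (by positivity)]
        congr 1
        push_cast
        ring
      rw [h2, ← mul_pow]
      gcongr
    · refine (integrable_one_add_norm ?_).const_mul _
      rw [finrank_euclideanSpace_fin, Nat.cast_sub (by omega)]
      push_cast
      linarith
    · refine Eventually.of_forall fun x => ?_
      have h0 : Tendsto (fun t : ℝ => cP d * t ^ (1 - (d : ℝ)) * ∫ y, ‖f y‖) atTop (𝓝 0) := by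
        have := tendsto_rpow_neg_atTop (y := (d : ℝ) - 1) (by linarith)
        rw [neg_sub] at this
        simpa using (this.const_mul (cP d)).mul_const (∫ y, ‖f y‖)
      have h1 : Tendsto (fun t => ‖cv (ker0 d) f (x, t)‖) atTop (𝓝 0) := by
        refine tendsto_of_tendsto_of_tendsto_of_le_of_le' tendsto_const_nhds h0
          (Eventually.of_forall fun t => norm_nonneg _) ?_
        filter_upwards [eventually_ge_atTop 1] with t ht
        exact norm_cv_le hf hfc (p := (x, t)) fun y _ => (ker0_bound_large hd (x - y) ht).1
      simpa using h1.pow 2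
  simpa using hlim

/-! ### Fubini and the energy identity -/

lemma gradSq_nonneg (u : E' d × ℝ → Fm m) (p : E' d × ℝ) : 0 ≤ gradSq d m u p := by
  unfold gradSq; positivity

lemma measurable_gradSq (u : E' d × ℝ → Fm m) : Measurable (gradSq d m u) := by
  unfold gradSq
  exact (Finset.measurable_sum _ fun i _ =>
    (measurable_fderiv_apply_const ℝ u _).norm.pow_const 2).add
    ((measurable_fderiv_apply_const ℝ u _).norm.pow_const 2)

/-- Fubini in the upper half-space for a nonnegative integrand. -/
lemma integral_upperHalf {G : E' d × ℝ → ℝ} (hG : Measurable G)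
    (h1 : ∀ t, 0 < t → Integrable fun x => G (x, t))
    (h2 : IntegrableOn (fun t => ∫ x, ‖G (x, t)‖) (Set.Ioi 0)) :
    ∫ p in upperHalf d, G p = ∫ t in Set.Ioi 0, ∫ x, G (x, t) := by
  have hset : upperHalf d = Set.univ ×ˢ Set.Ioi (0 : ℝ) := by
    ext p; simp [upperHalf]
  have hint : Integrable G ((volume : Measure (E' d)).prod (volume.restrict (Set.Ioi (0 : ℝ)))) := by
    rw [integrable_prod_iff' hG.aestronglyMeasurable]
    exact ⟨(ae_restrict_mem measurableSet_Ioi).mono fun t ht => h1 t ht, h2⟩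
  rw [hset, Measure.volume_eq_prod, ← Measure.prod_restrict, Measure.restrict_univ,
    integral_prod_symm _ hint]

end limits

/-- **Energy identity for the Poisson extension.** For `f : ℝ^{d-1} → ℝ^m` continuous
with compact support and `v = 𝓗f`,
`∫_{ℝ^d_+} y_d |∇v|² dy = (1/2) ∫_{ℝ^{d-1}} |f|² dy'`. -/
theorem poissonExt_weighted_energy_identity
    (d m : ℕ) (hd : 2 < d) (hm : 1 < m)
    (f : E' d → Fm m) (hf : Continuous f) (hfc : HasCompactSupport f) :
    ∫ y in upperHalf d, y.2 * gradSq d m (poissonExt d m f) y =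
      (1 / 2) * ∫ y' : E' d, ‖f y'‖ ^ 2 := by
  rw [poissonExt_eq_cv]
  set v := cv (ker0 d) f with hv
  obtain ⟨hI, hval⟩ := integral_mul_of_convex_limits
    (fun t ht => hasDerivAt_l2 hd hf hfc ht) (fun t ht => hasDerivAt_l2_deriv hd hf hfc ht)
    (fun t _ => integral_nonneg fun x => gradSq_nonneg _ _)
    (tendsto_l2_zero hd hf hfc) (tendsto_l2_atTop hd hf hfc)
  rw [← hval, integral_upperHalf (G := fun y => y.2 * gradSq d m v y)
    (measurable_snd.mul (measurable_gradSq v))]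
  · simp only [integral_const_mul, sliceEnergy]
    rfl
  · exact fun t ht => (integrable_gradSq_slice hd hf hfc ht).const_mul t
  · refine hI.congr_fun (fun t ht => ?_) measurableSet_Ioi
    have ht' : 0 < t := ht
    simp only [sliceEnergy, ← integral_const_mul]
    refine integral_congr_ae (Filter.Eventually.of_forall fun x => ?_)
    exact (Real.norm_of_nonneg (mul_nonneg ht'.le (gradSq_nonneg _ _))).symm

end HarmonicMapsHalfSpace
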